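/- arXiv:1008.1124 — 5 statements merged into one kernel-verified Lean document; each statement's English description precedes it below -/
import Mathlib

section
/- Let (γ, P) be a smooth solution of system (N) and let α : ℝ → ℝ³ be smooth. Then the pair (γ̄, P̄) defined by γ̄(t,ξ) = γ(t,ξ) + α(t) and P̄(t,ξ) = P(t,ξ) − γ(t,ξ)·α''(t) − ½ α(t)·α''(t) is again a smooth solution of system (N) (the generalized Galilean symmetry). -/
/-!
A translation depending on time alone does not change the spatial derivatives of `γ`, hence neither
the constraint `det (∂γ/∂ξ) = 1` nor the cross products, while it adds `α''` to `∂²γ/∂t²`. The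
pressure correction `-γ ⬝ᵥ α''` contributes the vector
`-∑ (∂γ/∂ξⁱ ⬝ᵥ α'') • (∂γ/∂ξʲ ⨯₃ ∂γ/∂ξᵏ)`, summed over cyclic `(i, j, k)`. By Cramer's rule in
dimension three this is `-det (∂γ/∂ξ) • α'' = -α''`, which cancels the acceleration. Any function of
time alone may moreover be subtracted from the pressure.
-/

open Matrix

noncomputable section

abbrev V3 := Fin 3 → ℝ

noncomputable def Dt {E : Type*} [NormedAddCommGroup E] [NormedSpace ℝ E]
    (f : ℝ → ℝ → ℝ → ℝ → E) : ℝ → ℝ → ℝ → ℝ → E :=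
  fun t a b c => deriv (fun s => f s a b c) t

noncomputable def D1 {E : Type*} [NormedAddCommGroup E] [NormedSpace ℝ E]
    (f : ℝ → ℝ → ℝ → ℝ → E) : ℝ → ℝ → ℝ → ℝ → E :=
  fun t a b c => deriv (fun s => f t s b c) a

noncomputable def D2 {E : Type*} [NormedAddCommGroup E] [NormedSpace ℝ E]
    (f : ℝ → ℝ → ℝ → ℝ → E) : ℝ → ℝ → ℝ → ℝ → E :=
  fun t a b c => deriv (fun s => f t a s c) b

noncomputable def D3 {E : Type*} [NormedAddCommGroup E] [NormedSpace ℝ E]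
    (f : ℝ → ℝ → ℝ → ℝ → E) : ℝ → ℝ → ℝ → ℝ → E :=
  fun t a b c => deriv (fun s => f t a b s) c

def Smooth4 {E : Type*} [NormedAddCommGroup E] [NormedSpace ℝ E]
    (f : ℝ → ℝ → ℝ → ℝ → E) : Prop :=
  ContDiff ℝ (⊤ : ℕ∞) (fun q : ℝ × ℝ × ℝ × ℝ => f q.1 q.2.1 q.2.2.1 q.2.2.2)

/-- System (N). -/
def SystemN (γ : ℝ → ℝ → ℝ → ℝ → V3) (P : ℝ → ℝ → ℝ → ℝ → ℝ) : Prop :=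
  (∀ t a b c : ℝ,
      Dt (Dt γ) t a b c - D1 (D1 γ) t a b c
        + D1 P t a b c • crossProduct (D2 γ t a b c) (D3 γ t a b c)
        + D2 P t a b c • crossProduct (D3 γ t a b c) (D1 γ t a b c)
        + D3 P t a b c • crossProduct (D1 γ t a b c) (D2 γ t a b c) = 0)
    ∧ (∀ t a b c : ℝ,
      (Matrix.of ![D1 γ t a b c, D2 γ t a b c, D3 γ t a b c]).det = 1)

section LinearAlgebra

variable {R : Type*} [CommRing R]

theorem dotProduct_smul_cross_add_cyclic (u v w x : Fin 3 → R) :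
    (u ⬝ᵥ x) • v ⨯₃ w + (v ⬝ᵥ x) • w ⨯₃ u + (w ⬝ᵥ x) • u ⨯₃ v
      = (Matrix.of ![u, v, w]).det • x := by
  ext i
  fin_cases i <;>
    simp [cross_apply, vec3_dotProduct, det_fin_three] <;> ring

end LinearAlgebra

section DotProduct

variable {𝕜 A ι : Type*} [NontriviallyNormedField 𝕜] [NormedRing A] [NormedAlgebra 𝕜 A] [Fintype ι]

theorem contDiff_dotProduct {E : Type*} [NormedAddCommGroup E] [NormedSpace 𝕜 E]
    {n : WithTop ℕ∞} {f g : E → ι → A} (hf : ContDiff 𝕜 n f) (hg : ContDiff 𝕜 n g) :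
    ContDiff 𝕜 n fun x => f x ⬝ᵥ g x :=
  ContDiff.sum fun i _ => (contDiff_pi.1 hf i).mul (contDiff_pi.1 hg i)

theorem hasDerivAt_dotProduct_const {f : 𝕜 → ι → A} {f' : ι → A} {x : 𝕜}
    (hf : HasDerivAt f f' x) (v : ι → A) :
    HasDerivAt (fun s => f s ⬝ᵥ v) (f' ⬝ᵥ v) x :=
  HasDerivAt.fun_sum fun i _ => (hasDerivAt_pi.1 hf i).mul_const (v i)

theorem deriv_sub_dotProduct_const_sub_const {p : 𝕜 → A} {f : 𝕜 → ι → A} {x : 𝕜}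
    (hp : DifferentiableAt 𝕜 p x) (hf : DifferentiableAt 𝕜 f x) (v : ι → A) (k : A) :
    deriv (fun s => p s - f s ⬝ᵥ v - k) x = deriv p x - deriv f x ⬝ᵥ v :=
  ((hp.hasDerivAt.sub (hasDerivAt_dotProduct_const hf.hasDerivAt v)).sub_const k).deriv

end DotProduct

section PartialDerivatives

variable {E : Type*} [NormedAddCommGroup E] [NormedSpace ℝ E]

/-- Joint `C^n` regularity of a field in the variables `(t, ξ¹, ξ², ξ³)`, encoded on the product
`ℝ × ℝ × ℝ × ℝ`. It grades `Smooth4`, which is definitionally the case `n = ∞`. -/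
def ContDiff4 (n : WithTop ℕ∞) (f : ℝ → ℝ → ℝ → ℝ → E) : Prop :=
  ContDiff ℝ n fun q : ℝ × ℝ × ℝ × ℝ => f q.1 q.2.1 q.2.2.1 q.2.2.2

namespace ContDiff4

variable {m n : WithTop ℕ∞} {f g : ℝ → ℝ → ℝ → ℝ → E}

theorem of_le (hf : ContDiff4 n f) (hmn : m ≤ n) : ContDiff4 m f :=
  ContDiff.of_le hf hmn

theorem of_time {α : ℝ → E} (hα : ContDiff ℝ n α) : ContDiff4 n fun t _ _ _ => α t :=
  hα.comp contDiff_fst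

theorem add (hf : ContDiff4 n f) (hg : ContDiff4 n g) :
    ContDiff4 n fun t a b c => f t a b c + g t a b c :=
  ContDiff.add hf hg

theorem sub (hf : ContDiff4 n f) (hg : ContDiff4 n g) :
    ContDiff4 n fun t a b c => f t a b c - g t a b c :=
  ContDiff.sub hf hg

theorem dotProduct {ι : Type*} [Fintype ι] {f g : ℝ → ℝ → ℝ → ℝ → ι → ℝ}
    (hf : ContDiff4 n f) (hg : ContDiff4 n g) :
    ContDiff4 n fun t a b c => f t a b c ⬝ᵥ g t a b c :=
  contDiff_dotProduct hf hg

theorem comp_path (hf : ContDiff4 n f) {t a b c : ℝ → ℝ} (ht : ContDiff ℝ n t)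
    (ha : ContDiff ℝ n a) (hb : ContDiff ℝ n b) (hc : ContDiff ℝ n c) :
    ContDiff ℝ n fun s => f (t s) (a s) (b s) (c s) :=
  ContDiff.comp (f := fun s => (t s, a s, b s, c s)) hf (by fun_prop)

theorem contDiff_time (hf : ContDiff4 n f) (a b c : ℝ) : ContDiff ℝ n fun s => f s a b c :=
  hf.comp_path contDiff_id contDiff_const contDiff_const contDiff_const

theorem contDiff_coord1 (hf : ContDiff4 n f) (t b c : ℝ) : ContDiff ℝ n fun s => f t s b c :=
  hf.comp_path contDiff_const contDiff_id contDiff_const contDiff_const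

theorem contDiff_coord2 (hf : ContDiff4 n f) (t a c : ℝ) : ContDiff ℝ n fun s => f t a s c :=
  hf.comp_path contDiff_const contDiff_const contDiff_id contDiff_const

theorem contDiff_coord3 (hf : ContDiff4 n f) (t a b : ℝ) : ContDiff ℝ n fun s => f t a b s :=
  hf.comp_path contDiff_const contDiff_const contDiff_const contDiff_id

end ContDiff4

theorem D1_add_time (f : ℝ → ℝ → ℝ → ℝ → E) (α : ℝ → E) :
    D1 (fun t a b c => f t a b c + α t) = D1 f := by
  simp only [funext_iff, D1, deriv_add_const, implies_true]

theorem D2_add_time (f : ℝ → ℝ → ℝ → ℝ → E) (α : ℝ → E) :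
    D2 (fun t a b c => f t a b c + α t) = D2 f := by
  simp only [funext_iff, D2, deriv_add_const, implies_true]

theorem D3_add_time (f : ℝ → ℝ → ℝ → ℝ → E) (α : ℝ → E) :
    D3 (fun t a b c => f t a b c + α t) = D3 f := by
  simp only [funext_iff, D3, deriv_add_const, implies_true]

theorem Dt_Dt_add_time {f : ℝ → ℝ → ℝ → ℝ → E} (hf : ContDiff4 2 f) {α : ℝ → E}
    (hα : ContDiff ℝ 2 α) (t a b c : ℝ) :
    Dt (Dt fun t a b c => f t a b c + α t) t a b c = Dt (Dt f) t a b c + deriv (deriv α) t := by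
  have hft : ContDiff ℝ 2 fun s => f s a b c := hf.contDiff_time a b c
  have hdt : deriv (fun s => f s a b c + α s)
      = fun s => deriv (fun r => f r a b c) s + deriv α s := funext fun s =>
    deriv_fun_add (hft.differentiable two_ne_zero s) (hα.differentiable two_ne_zero s)
  calc deriv (deriv fun s => f s a b c + α s) t
      = deriv (fun s => deriv (fun r => f r a b c) s + deriv α s) t := by rw [hdt]
    _ = deriv (deriv fun s => f s a b c) t + deriv (deriv α) t :=
        deriv_fun_add (hft.differentiable_deriv_two t) (hα.differentiable_deriv_two t)

section Pressure

variable {ι : Type*} [Fintype ι] {P : ℝ → ℝ → ℝ → ℝ → ℝ} {γ : ℝ → ℝ → ℝ → ℝ → ι → ℝ}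

theorem D1_sub_dotProduct_sub_time (hP : ContDiff4 1 P) (hγ : ContDiff4 1 γ) (β : ℝ → ι → ℝ)
    (f : ℝ → ℝ) (t a b c : ℝ) :
    D1 (fun t a b c => P t a b c - γ t a b c ⬝ᵥ β t - f t) t a b c
      = D1 P t a b c - D1 γ t a b c ⬝ᵥ β t :=
  deriv_sub_dotProduct_const_sub_const ((hP.contDiff_coord1 t b c).differentiable one_ne_zero a)
    ((hγ.contDiff_coord1 t b c).differentiable one_ne_zero a) (β t) (f t)

theorem D2_sub_dotProduct_sub_time (hP : ContDiff4 1 P) (hγ : ContDiff4 1 γ) (β : ℝ → ι → ℝ)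
    (f : ℝ → ℝ) (t a b c : ℝ) :
    D2 (fun t a b c => P t a b c - γ t a b c ⬝ᵥ β t - f t) t a b c
      = D2 P t a b c - D2 γ t a b c ⬝ᵥ β t :=
  deriv_sub_dotProduct_const_sub_const ((hP.contDiff_coord2 t a c).differentiable one_ne_zero b)
    ((hγ.contDiff_coord2 t a c).differentiable one_ne_zero b) (β t) (f t)

theorem D3_sub_dotProduct_sub_time (hP : ContDiff4 1 P) (hγ : ContDiff4 1 γ) (β : ℝ → ι → ℝ)
    (f : ℝ → ℝ) (t a b c : ℝ) :
    D3 (fun t a b c => P t a b c - γ t a b c ⬝ᵥ β t - f t) t a b c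
      = D3 P t a b c - D3 γ t a b c ⬝ᵥ β t :=
  deriv_sub_dotProduct_const_sub_const ((hP.contDiff_coord3 t a b).differentiable one_ne_zero c)
    ((hγ.contDiff_coord3 t a b).differentiable one_ne_zero c) (β t) (f t)

end Pressure

end PartialDerivatives

theorem SystemN.add_translation {γ : ℝ → ℝ → ℝ → ℝ → V3} {P : ℝ → ℝ → ℝ → ℝ → ℝ}
    (hsol : SystemN γ P) (hγ : ContDiff4 2 γ) (hP : ContDiff4 1 P)
    {α : ℝ → V3} (hα : ContDiff ℝ 2 α) (f : ℝ → ℝ) :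
    SystemN (fun t a b c => γ t a b c + α t)
      (fun t a b c => P t a b c - γ t a b c ⬝ᵥ deriv (deriv α) t - f t) := by
  obtain ⟨hmomentum, hdet⟩ := hsol
  have hγ1 : ContDiff4 1 γ := hγ.of_le one_le_two
  refine ⟨fun t a b c => ?_, fun t a b c => ?_⟩
  · have hcramer := dotProduct_smul_cross_add_cyclic (D1 γ t a b c) (D2 γ t a b c) (D3 γ t a b c)
      (deriv (deriv α) t)
    rw [hdet, one_smul] at hcramer
    rw [Dt_Dt_add_time hγ hα, D1_add_time, D2_add_time, D3_add_time,
      D1_sub_dotProduct_sub_time hP hγ1, D2_sub_dotProduct_sub_time hP hγ1,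
      D3_sub_dotProduct_sub_time hP hγ1]
    linear_combination (norm := module) hmomentum t a b c - hcramer
  · rw [D1_add_time, D2_add_time, D3_add_time]
    exact hdet t a b c

theorem galilean_symmetry_systemN_general {n : WithTop ℕ∞} (hn : 1 ≤ n)
    {γ : ℝ → ℝ → ℝ → ℝ → V3} {P : ℝ → ℝ → ℝ → ℝ → ℝ}
    (hγ : ContDiff4 (n + 1) γ) (hP : ContDiff4 n P) (hsol : SystemN γ P)
    {α : ℝ → V3} (hα : ContDiff ℝ (n + 1 + 1) α) {f : ℝ → ℝ} (hf : ContDiff ℝ n f) :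
    ContDiff4 (n + 1) (fun t a b c => γ t a b c + α t) ∧
    ContDiff4 n (fun t a b c => P t a b c - γ t a b c ⬝ᵥ deriv (deriv α) t - f t) ∧
    SystemN (fun t a b c => γ t a b c + α t)
      (fun t a b c => P t a b c - γ t a b c ⬝ᵥ deriv (deriv α) t - f t) := by
  have htwo : 2 ≤ n + 1 := by
    rw [← one_add_one_eq_two]
    gcongr
  have hα1 : ContDiff ℝ (n + 1) α := hα.of_le le_self_add
  have hα'' : ContDiff ℝ n (deriv (deriv α)) := hα.deriv'.deriv'
  exact ⟨hγ.add (.of_time hα1),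
    (hP.sub ((hγ.of_le le_self_add).dotProduct (.of_time hα''))).sub (.of_time hf),
    hsol.add_translation (hγ.of_le htwo) (hP.of_le hn) (hα1.of_le htwo) f⟩

/-- Generalized Galilean symmetry of system (N): if `(γ, P)` is a smooth solution and
`α : ℝ → ℝ³` is smooth, then `γ̄ = γ + α(t)`,
`P̄ = P − γ·α'' − ½ α·α''` is again a smooth solution. -/
theorem galilean_symmetry_systemN
    (γ : ℝ → ℝ → ℝ → ℝ → V3) (P : ℝ → ℝ → ℝ → ℝ → ℝ)
    (hγ : Smooth4 γ) (hP : Smooth4 P) (hsol : SystemN γ P)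
    (α : ℝ → V3) (hα : ContDiff ℝ (⊤ : ℕ∞) α) :
    Smooth4 (fun t a b c => γ t a b c + α t) ∧
    Smooth4 (fun t a b c =>
      P t a b c - γ t a b c ⬝ᵥ deriv (deriv α) t
        - (1 / 2 : ℝ) * (α t ⬝ᵥ deriv (deriv α) t)) ∧
    SystemN (fun t a b c => γ t a b c + α t)
      (fun t a b c =>
        P t a b c - γ t a b c ⬝ᵥ deriv (deriv α) t
          - (1 / 2 : ℝ) * (α t ⬝ᵥ deriv (deriv α) t)) := by
  exact galilean_symmetry_systemN_general (n := (⊤ : ℕ∞)) (by simp) hγ hP hsol hα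
    (contDiff_const.mul (contDiff_dotProduct hα hα.deriv'.deriv'))
end
end

section
/- Let (γ, P) be a smooth solution of system (N) and let λ > 0. Then the pair (γ̄, P̄) defined by γ̄(t, ξ¹, ξ², ξ³) = λ² γ(t, ξ¹, λ⁻³ξ², λ⁻³ξ³) and P̄(t, ξ¹, ξ², ξ³) = λ⁴ P(t, ξ¹, λ⁻³ξ², λ⁻³ξ³) is again a smooth solution of system (N) (the dilatation symmetry generated by S₂ = 3ξ²∂_{ξ²} + 3ξ³∂_{ξ³} + 2γ·∂_γ + 4P∂_P). -/
open Matrix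

noncomputable section

/-!
Under `γ ↦ k γ(τ t, m₁ ξ¹, m₂ ξ², m₃ ξ³)`, `P ↦ p P(τ t, m₁ ξ¹, m₂ ξ², m₃ ξ³)` each part of system
(N) is multiplied by a constant: every pressure term involves all three `ξ`-derivatives once and
`γ` twice, so it gains the factor `p k² m₁ m₂ m₃`; the Jacobian determinant gains `k³ m₁ m₂ m₃`;
and the wave operator gains `k m₁²` once `τ² = m₁²`. The system is preserved when
`k³ m₁ m₂ m₃ = 1` and `p = (k m₁)²`. The stated symmetry is `k = λ²`, `τ = m₁ = 1`,
`m₂ = m₃ = λ⁻³`.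
-/

/-- The rescaling `k f(τ t, m₁ ξ¹, m₂ ξ², m₃ ξ³)` of a field `f(t, ξ¹, ξ², ξ³)`, which carries the
dilatation symmetries of system (N). The amplitude `k` is kept apart from the coordinate scales
because differentiation changes only the amplitude. -/
def dilate {E : Type*} [SMul ℝ E]
    (k τ m₁ m₂ m₃ : ℝ) (f : ℝ → ℝ → ℝ → ℝ → E) : ℝ → ℝ → ℝ → ℝ → E :=
  fun t a b c => k • f (τ * t) (m₁ * a) (m₂ * b) (m₃ * c)

/-- The operator `∂²/∂t² − ∂²/∂(ξ¹)²` of the momentum equation of system (N). -/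
def waveOp {E : Type*} [NormedAddCommGroup E] [NormedSpace ℝ E]
    (f : ℝ → ℝ → ℝ → ℝ → E) : ℝ → ℝ → ℝ → ℝ → E :=
  Dt (Dt f) - D1 (D1 f)

/-- The pressure terms of the momentum equation of system (N), with the sign they have on its
left-hand side. -/
def pressureTerm (γ : ℝ → ℝ → ℝ → ℝ → V3) (P : ℝ → ℝ → ℝ → ℝ → ℝ) : ℝ → ℝ → ℝ → ℝ → V3 :=
  fun t a b c =>
    D1 P t a b c • crossProduct (D2 γ t a b c) (D3 γ t a b c)
      + D2 P t a b c • crossProduct (D3 γ t a b c) (D1 γ t a b c)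
      + D3 P t a b c • crossProduct (D1 γ t a b c) (D2 γ t a b c)

/-- The determinant of `∂γ/∂ξ`; as in `SystemN`, the partial derivatives of `γ` are the rows. -/
def jacobianDet (γ : ℝ → ℝ → ℝ → ℝ → V3) : ℝ → ℝ → ℝ → ℝ → ℝ :=
  fun t a b c => (Matrix.of ![D1 γ t a b c, D2 γ t a b c, D3 γ t a b c]).det

section Dilate

variable {E : Type*} [AddCommGroup E] [Module ℝ E] (k τ m₁ m₂ m₃ : ℝ)

theorem dilate_add (f g : ℝ → ℝ → ℝ → ℝ → E) :
    dilate k τ m₁ m₂ m₃ (f + g) = dilate k τ m₁ m₂ m₃ f + dilate k τ m₁ m₂ m₃ g := by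
  funext t a b c
  exact smul_add k _ _

theorem dilate_sub (f g : ℝ → ℝ → ℝ → ℝ → E) :
    dilate k τ m₁ m₂ m₃ (f - g) = dilate k τ m₁ m₂ m₃ f - dilate k τ m₁ m₂ m₃ g := by
  funext t a b c
  exact smul_sub k _ _

theorem dilate_zero : dilate k τ m₁ m₂ m₃ (0 : ℝ → ℝ → ℝ → ℝ → E) = 0 := by
  funext
  exact smul_zero k

theorem dilate_const_one : dilate 1 τ m₁ m₂ m₃ (1 : ℝ → ℝ → ℝ → ℝ → ℝ) = 1 := by
  funext
  exact one_smul ℝ 1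

theorem dilate_one_one {F : Type*} [SMul ℝ F] (f : ℝ → ℝ → ℝ → ℝ → F) :
    dilate k 1 1 m₂ m₃ f = fun t a b c => k • f t a (m₂ * b) (m₃ * c) := by
  funext t a b c
  simp only [dilate, one_mul]

end Dilate

section Derivatives

variable {E : Type*} [NormedAddCommGroup E] [NormedSpace ℝ E] (k τ m₁ m₂ m₃ : ℝ)

theorem Smooth4.dilate {f : ℝ → ℝ → ℝ → ℝ → E} (hf : Smooth4 f) :
    Smooth4 (dilate k τ m₁ m₂ m₃ f) := by
  have hscale : ContDiff ℝ (⊤ : ℕ∞) fun q : ℝ × ℝ × ℝ × ℝ =>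
      (τ * q.1, m₁ * q.2.1, m₂ * q.2.2.1, m₃ * q.2.2.2) := by
    fun_prop
  exact (ContDiff.comp hf hscale).const_smul k

theorem deriv_const_smul_comp_mul_left (m x : ℝ) (g : ℝ → E) :
    deriv (fun s => k • g (m * s)) x = (k * m) • deriv g (m * x) := by
  rw [deriv_fun_const_smul_field, deriv_comp_mul_left, smul_smul]

theorem Dt_dilate (f : ℝ → ℝ → ℝ → ℝ → E) :
    Dt (dilate k τ m₁ m₂ m₃ f) = dilate (k * τ) τ m₁ m₂ m₃ (Dt f) := by
  funext t a b c
  exact deriv_const_smul_comp_mul_left k τ t fun s => f s (m₁ * a) (m₂ * b) (m₃ * c)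

theorem D1_dilate (f : ℝ → ℝ → ℝ → ℝ → E) :
    D1 (dilate k τ m₁ m₂ m₃ f) = dilate (k * m₁) τ m₁ m₂ m₃ (D1 f) := by
  funext t a b c
  exact deriv_const_smul_comp_mul_left k m₁ a fun s => f (τ * t) s (m₂ * b) (m₃ * c)

theorem D2_dilate (f : ℝ → ℝ → ℝ → ℝ → E) :
    D2 (dilate k τ m₁ m₂ m₃ f) = dilate (k * m₂) τ m₁ m₂ m₃ (D2 f) := by
  funext t a b c
  exact deriv_const_smul_comp_mul_left k m₂ b fun s => f (τ * t) (m₁ * a) s (m₃ * c)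

theorem D3_dilate (f : ℝ → ℝ → ℝ → ℝ → E) :
    D3 (dilate k τ m₁ m₂ m₃ f) = dilate (k * m₃) τ m₁ m₂ m₃ (D3 f) := by
  funext t a b c
  exact deriv_const_smul_comp_mul_left k m₃ c fun s => f (τ * t) (m₁ * a) (m₂ * b) s

variable {τ m₁} in
theorem waveOp_dilate (hτ : τ ^ 2 = m₁ ^ 2) (f : ℝ → ℝ → ℝ → ℝ → E) :
    waveOp (dilate k τ m₁ m₂ m₃ f) = dilate (k * m₁ ^ 2) τ m₁ m₂ m₃ (waveOp f) := by
  have hkτ : k * τ * τ = k * m₁ ^ 2 := by rw [mul_assoc, ← sq, hτ]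
  have hkm : k * m₁ * m₁ = k * m₁ ^ 2 := by rw [mul_assoc, ← sq]
  rw [waveOp, Dt_dilate, Dt_dilate, D1_dilate, D1_dilate, hkτ, hkm, waveOp, dilate_sub]

theorem pressureTerm_dilate (p : ℝ) (γ : ℝ → ℝ → ℝ → ℝ → V3) (P : ℝ → ℝ → ℝ → ℝ → ℝ) :
    pressureTerm (dilate k τ m₁ m₂ m₃ γ) (dilate p τ m₁ m₂ m₃ P) =
      dilate (p * k ^ 2 * (m₁ * m₂ * m₃)) τ m₁ m₂ m₃ (pressureTerm γ P) := by
  unfold pressureTerm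
  rw [D1_dilate, D1_dilate, D2_dilate, D2_dilate, D3_dilate, D3_dilate]
  funext t a b c
  simp only [dilate, map_smul, LinearMap.smul_apply, smul_eq_mul]
  module

theorem jacobianDet_dilate (γ : ℝ → ℝ → ℝ → ℝ → V3) :
    jacobianDet (dilate k τ m₁ m₂ m₃ γ) =
      dilate (k ^ 3 * (m₁ * m₂ * m₃)) τ m₁ m₂ m₃ (jacobianDet γ) := by
  unfold jacobianDet
  rw [D1_dilate, D2_dilate, D3_dilate]
  funext t a b c
  simp only [dilate, Matrix.det_fin_three, Matrix.of_apply, Matrix.cons_val, Pi.smul_apply,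
    smul_eq_mul]
  ring

end Derivatives

theorem systemN_iff {γ : ℝ → ℝ → ℝ → ℝ → V3} {P : ℝ → ℝ → ℝ → ℝ → ℝ} :
    SystemN γ P ↔ waveOp γ + pressureTerm γ P = 0 ∧ jacobianDet γ = 1 := by
  simp only [SystemN, funext_iff, waveOp, pressureTerm, jacobianDet, Pi.add_apply, Pi.sub_apply,
    Pi.zero_apply, Pi.one_apply, add_assoc]

section Symmetry

variable {γ : ℝ → ℝ → ℝ → ℝ → V3} {P : ℝ → ℝ → ℝ → ℝ → ℝ} {k τ m₁ m₂ m₃ : ℝ}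

theorem SystemN.dilate (hsol : SystemN γ P) (hτ : τ ^ 2 = m₁ ^ 2)
    (hk : k ^ 3 * (m₁ * m₂ * m₃) = 1) :
    SystemN (dilate k τ m₁ m₂ m₃ γ) (dilate ((k * m₁) ^ 2) τ m₁ m₂ m₃ P) := by
  obtain ⟨hmomentum, hdet⟩ := systemN_iff.mp hsol
  have hamplitude : (k * m₁) ^ 2 * k ^ 2 * (m₁ * m₂ * m₃) = k * m₁ ^ 2 := by
    linear_combination k * m₁ ^ 2 * hk
  refine systemN_iff.mpr ⟨?_, ?_⟩
  · rw [waveOp_dilate k m₂ m₃ hτ, pressureTerm_dilate, hamplitude, ← dilate_add, hmomentum,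
      dilate_zero]
  · rw [jacobianDet_dilate, hk, hdet, dilate_const_one]

theorem dilatation_symmetry_systemN_general
    (hγ : Smooth4 γ) (hP : Smooth4 P) (hsol : SystemN γ P)
    (hτ : τ ^ 2 = m₁ ^ 2) (hk : k ^ 3 * (m₁ * m₂ * m₃) = 1) :
    Smooth4 (dilate k τ m₁ m₂ m₃ γ) ∧
    Smooth4 (dilate ((k * m₁) ^ 2) τ m₁ m₂ m₃ P) ∧
    SystemN (dilate k τ m₁ m₂ m₃ γ) (dilate ((k * m₁) ^ 2) τ m₁ m₂ m₃ P) :=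
  ⟨hγ.dilate .., hP.dilate .., hsol.dilate hτ hk⟩

end Symmetry

/-- Dilatation symmetry of system (N) generated by
`S₂ = 3ξ²∂_{ξ²} + 3ξ³∂_{ξ³} + 2γ·∂_γ + 4P∂_P`: if `(γ, P)` is a smooth solution
and `λ > 0`, then `γ̄(t,ξ¹,ξ²,ξ³) = λ² γ(t,ξ¹,λ⁻³ξ²,λ⁻³ξ³)`,
`P̄(t,ξ¹,ξ²,ξ³) = λ⁴ P(t,ξ¹,λ⁻³ξ²,λ⁻³ξ³)` is again a smooth solution. -/
theorem dilatation_symmetry_systemN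
    (γ : ℝ → ℝ → ℝ → ℝ → V3) (P : ℝ → ℝ → ℝ → ℝ → ℝ)
    (hγ : Smooth4 γ) (hP : Smooth4 P) (hsol : SystemN γ P)
    (l : ℝ) (hl : 0 < l) :
    Smooth4 (fun t a b c => (l ^ 2 : ℝ) • γ t a (l⁻¹ ^ 3 * b) (l⁻¹ ^ 3 * c)) ∧
    Smooth4 (fun t a b c => (l ^ 4 : ℝ) * P t a (l⁻¹ ^ 3 * b) (l⁻¹ ^ 3 * c)) ∧
    SystemN (fun t a b c => (l ^ 2 : ℝ) • γ t a (l⁻¹ ^ 3 * b) (l⁻¹ ^ 3 * c))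
      (fun t a b c => (l ^ 4 : ℝ) * P t a (l⁻¹ ^ 3 * b) (l⁻¹ ^ 3 * c)) := by
  have hk : (l ^ 2) ^ 3 * (1 * l⁻¹ ^ 3 * l⁻¹ ^ 3) = 1 := by field_simp
  simpa only [dilate_one_one, mul_one, smul_eq_mul, ← pow_mul, Nat.reduceMul] using
    dilatation_symmetry_systemN_general hγ hP hsol (τ := 1) rfl hk
end
end

section
/- Let (γ, P) be a smooth solution of system (N), let a : ℝ² → ℝ be smooth, and let Ξ = (Ξ¹, Ξ²) : ℝ² → ℝ² be a smooth map whose Jacobian determinant is identically 1. Then the pair (γ̄, P̄) defined by γ̄(t, ξ¹, ξ², ξ³) = γ(t, ξ¹ + a(ξ², ξ³), Ξ¹(ξ², ξ³), Ξ²(ξ², ξ³)) and P̄(t, ξ¹, ξ², ξ³) = P(t, ξ¹ + a(ξ², ξ³), Ξ¹(ξ², ξ³), Ξ²(ξ², ξ³)) is again a smooth solution of system (N) (the reparametrization symmetry). -/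
open Matrix

noncomputable section

/-!
Let `M` be the matrix whose rows are `∂γ/∂ξ¹, ∂γ/∂ξ², ∂γ/∂ξ³`. Its adjugate has columns
`∂γ/∂ξ² × ∂γ/∂ξ³`, `∂γ/∂ξ³ × ∂γ/∂ξ¹`, `∂γ/∂ξ¹ × ∂γ/∂ξ²`, so the pressure force in system (N) is
`adj M ∇P`. By the chain rule the reparametrization replaces `M` by `J M` and `∇P` by `J ∇P`, where
`J` is the Jacobian matrix of the reparametrization, and `det J` is the Jacobian determinant of `Ξ`.
Hence `adj (J M) (J ∇P) = det J • adj M ∇P` and `det (J M) = det J * det M` are unchanged when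
`det J = 1`, while `∂²/∂t²` and `∂²/∂(ξ¹)²` commute with a translation of `ξ¹` whose size depends
only on `ξ²` and `ξ³`.
-/

section MatrixAlgebra

variable {R : Type*} [CommRing R]

lemma adjugate_mul_mulVec_mulVec {ι : Type*} [Fintype ι] [DecidableEq ι]
    (A B : Matrix ι ι R) (v : ι → R) :
    (A * B).adjugate *ᵥ (A *ᵥ v) = A.det • (B.adjugate *ᵥ v) := by
  calc (A * B).adjugate *ᵥ (A *ᵥ v)
      = (B.adjugate * (A.adjugate * A)) *ᵥ v := by
        rw [adjugate_mul_distrib, mulVec_mulVec, Matrix.mul_assoc]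
    _ = A.det • (B.adjugate *ᵥ v) := by
        rw [adjugate_mul, Matrix.mul_smul, Matrix.mul_one, smul_mulVec]

lemma adjugate_of_rows_mulVec (u v w p : Fin 3 → R) :
    (of ![u, v, w]).adjugate *ᵥ p
      = p 0 • crossProduct v w + p 1 • crossProduct w u + p 2 • crossProduct u v := by
  ext i
  fin_cases i <;>
    simp only [adjugate_fin_three, cross_apply, mulVec, dotProduct, Fin.sum_univ_three, of_apply,
      cons_val, Fin.zero_eta, Fin.mk_one, Fin.reduceFinMk, Pi.add_apply, Pi.smul_apply,
      smul_eq_mul] <;>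
    ring

end MatrixAlgebra

section Calculus

variable {E : Type*} [NormedAddCommGroup E] [NormedSpace ℝ E]

/-- The function of a single variable in `ℝ × ℝ³` given by a curried function of `t, ξ¹, ξ², ξ³`;
regularity of the curried function means regularity of this one. -/
def uncurry₄ (f : ℝ → ℝ → ℝ → ℝ → E) : ℝ × ℝ × ℝ × ℝ → E :=
  fun q => f q.1 q.2.1 q.2.2.1 q.2.2.2

/-- The spatial derivatives of `f`, indexed by the coordinates `ξ¹, ξ², ξ³`. For scalar `f` this is
the gradient; for vector-valued `f` its entries are the rows of a matrix, which is therefore the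
transpose of the usual Jacobian matrix. -/
def spatialDeriv (f : ℝ → ℝ → ℝ → ℝ → E) (t x y z : ℝ) : Fin 3 → E :=
  ![D1 f t x y z, D2 f t x y z, D3 f t x y z]

/-- The pullback of `f` under `(t, ξ¹, ξ², ξ³) ↦ (t, ξ¹ + a(ξ², ξ³), Ξ¹(ξ², ξ³), Ξ²(ξ², ξ³))`. -/
def reparam (f : ℝ → ℝ → ℝ → ℝ → E) (a Ξ₁ Ξ₂ : ℝ → ℝ → ℝ) : ℝ → ℝ → ℝ → ℝ → E :=
  fun t x y z => f t (x + a y z) (Ξ₁ y z) (Ξ₂ y z)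

/-- The Jacobian matrix of `(ξ¹, ξ², ξ³) ↦ (ξ¹ + a(ξ², ξ³), Ξ¹(ξ², ξ³), Ξ²(ξ², ξ³))`, with rows
indexed by the variable of differentiation, as in `spatialDeriv`. -/
def reparamJacobian (a Ξ₁ Ξ₂ : ℝ → ℝ → ℝ) (y z : ℝ) : Matrix (Fin 3) (Fin 3) ℝ :=
  !![1, 0, 0;
    deriv (fun s => a s z) y, deriv (fun s => Ξ₁ s z) y, deriv (fun s => Ξ₂ s z) y;
    deriv (fun s => a y s) z, deriv (fun s => Ξ₁ y s) z, deriv (fun s => Ξ₂ y s) z]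

lemma det_reparamJacobian (a Ξ₁ Ξ₂ : ℝ → ℝ → ℝ) (y z : ℝ) :
    (reparamJacobian a Ξ₁ Ξ₂ y z).det
      = deriv (fun s => Ξ₁ s z) y * deriv (fun s => Ξ₂ y s) z
        - deriv (fun s => Ξ₁ y s) z * deriv (fun s => Ξ₂ s z) y := by
  simp only [reparamJacobian, det_fin_three, of_apply, cons_val]
  ring

lemma contDiff_reparam {n : WithTop ℕ∞} {f : ℝ → ℝ → ℝ → ℝ → E} {a Ξ₁ Ξ₂ : ℝ → ℝ → ℝ}
    (hf : ContDiff ℝ n (uncurry₄ f)) (ha : ContDiff ℝ n (Function.uncurry a))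
    (hΞ₁ : ContDiff ℝ n (Function.uncurry Ξ₁)) (hΞ₂ : ContDiff ℝ n (Function.uncurry Ξ₂)) :
    ContDiff ℝ n (uncurry₄ (reparam f a Ξ₁ Ξ₂)) := by
  have hyz : ContDiff ℝ n (fun q : ℝ × ℝ × ℝ × ℝ => q.2.2) := by fun_prop
  exact hf.comp <| contDiff_fst.prodMk <|
    (contDiff_snd.fst.add (ha.comp hyz)).prodMk ((hΞ₁.comp hyz).prodMk (hΞ₂.comp hyz))

section ChainRule

variable {f : ℝ → ℝ → ℝ → ℝ → E} {t s u' v' w' : ℝ} {u v w : ℝ → ℝ}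

lemma hasDerivAt_comp_spatial_curve_fderiv
    (hf : DifferentiableAt ℝ (uncurry₄ f) (t, u s, v s, w s))
    (hu : HasDerivAt u u' s) (hv : HasDerivAt v v' s) (hw : HasDerivAt w w' s) :
    HasDerivAt (fun r => f t (u r) (v r) (w r))
      (fderiv ℝ (uncurry₄ f) (t, u s, v s, w s) (0, u', v', w')) s :=
  hf.hasFDerivAt.comp_hasDerivAt (f := fun r => (t, u r, v r, w r)) s
    ((hasDerivAt_const s t).prodMk (hu.prodMk (hv.prodMk hw)))

lemma fderiv_uncurry₄_spatial {x y z : ℝ} (hf : DifferentiableAt ℝ (uncurry₄ f) (t, x, y, z))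
    (p q r : ℝ) :
    fderiv ℝ (uncurry₄ f) (t, x, y, z) (0, p, q, r)
      = p • D1 f t x y z + q • D2 f t x y z + r • D3 f t x y z := by
  have h₁ : D1 f t x y z = fderiv ℝ (uncurry₄ f) (t, x, y, z) (0, 1, 0, 0) :=
    (hasDerivAt_comp_spatial_curve_fderiv hf (hasDerivAt_id x) (hasDerivAt_const x y)
      (hasDerivAt_const x z)).deriv
  have h₂ : D2 f t x y z = fderiv ℝ (uncurry₄ f) (t, x, y, z) (0, 0, 1, 0) :=
    (hasDerivAt_comp_spatial_curve_fderiv hf (hasDerivAt_const y x) (hasDerivAt_id y)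
      (hasDerivAt_const y z)).deriv
  have h₃ : D3 f t x y z = fderiv ℝ (uncurry₄ f) (t, x, y, z) (0, 0, 0, 1) :=
    (hasDerivAt_comp_spatial_curve_fderiv hf (hasDerivAt_const z x) (hasDerivAt_const z y)
      (hasDerivAt_id z)).deriv
  rw [h₁, h₂, h₃, ← map_smul, ← map_smul, ← map_smul, ← map_add, ← map_add]
  simp

lemma deriv_comp_spatial_curve (hf : DifferentiableAt ℝ (uncurry₄ f) (t, u s, v s, w s))
    (hu : HasDerivAt u u' s) (hv : HasDerivAt v v' s) (hw : HasDerivAt w w' s) :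
    deriv (fun r => f t (u r) (v r) (w r)) s
      = u' • D1 f t (u s) (v s) (w s) + v' • D2 f t (u s) (v s) (w s)
        + w' • D3 f t (u s) (v s) (w s) := by
  rw [(hasDerivAt_comp_spatial_curve_fderiv hf hu hv hw).deriv, fderiv_uncurry₄_spatial hf]

end ChainRule

lemma hasDerivAt_partial_left {g : ℝ → ℝ → E} {y z : ℝ}
    (hg : DifferentiableAt ℝ (Function.uncurry g) (y, z)) :
    HasDerivAt (fun s => g s z) (deriv (fun s => g s z) y) y :=
  (hg.comp (f := fun s => (s, z)) y (by fun_prop)).hasDerivAt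

lemma hasDerivAt_partial_right {g : ℝ → ℝ → E} {y z : ℝ}
    (hg : DifferentiableAt ℝ (Function.uncurry g) (y, z)) :
    HasDerivAt (fun s => g y s) (deriv (fun s => g y s) z) z :=
  (hg.comp (f := fun s => (y, s)) z (by fun_prop)).hasDerivAt

lemma D1_reparam (f : ℝ → ℝ → ℝ → ℝ → E) (a Ξ₁ Ξ₂ : ℝ → ℝ → ℝ) :
    D1 (reparam f a Ξ₁ Ξ₂) = reparam (D1 f) a Ξ₁ Ξ₂ := by
  funext t x y z
  exact deriv_comp_add_const (fun r => f t r (Ξ₁ y z) (Ξ₂ y z)) (a y z) x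

lemma spatialDeriv_reparam {f : ℝ → ℝ → ℝ → ℝ → E} {a Ξ₁ Ξ₂ : ℝ → ℝ → ℝ} {t x y z : ℝ}
    (hf : DifferentiableAt ℝ (uncurry₄ f) (t, x + a y z, Ξ₁ y z, Ξ₂ y z))
    (ha : DifferentiableAt ℝ (Function.uncurry a) (y, z))
    (hΞ₁ : DifferentiableAt ℝ (Function.uncurry Ξ₁) (y, z))
    (hΞ₂ : DifferentiableAt ℝ (Function.uncurry Ξ₂) (y, z)) (i : Fin 3) :
    spatialDeriv (reparam f a Ξ₁ Ξ₂) t x y z i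
      = ∑ j, reparamJacobian a Ξ₁ Ξ₂ y z i j
          • spatialDeriv f t (x + a y z) (Ξ₁ y z) (Ξ₂ y z) j := by
  rw [Fin.sum_univ_three]
  fin_cases i
  · simp [spatialDeriv, reparamJacobian, D1_reparam, reparam]
  · exact deriv_comp_spatial_curve (u := fun s => x + a s z) hf
      ((hasDerivAt_partial_left ha).const_add x) (hasDerivAt_partial_left hΞ₁)
      (hasDerivAt_partial_left hΞ₂)
  · exact deriv_comp_spatial_curve (u := fun s => x + a y s) hf
      ((hasDerivAt_partial_right ha).const_add x) (hasDerivAt_partial_right hΞ₁)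
      (hasDerivAt_partial_right hΞ₂)

end Calculus

section Symmetry

variable {γ : ℝ → ℝ → ℝ → ℝ → V3} {P : ℝ → ℝ → ℝ → ℝ → ℝ}

lemma systemN_iff_adjugate :
    SystemN γ P ↔
      (∀ t x y z, Dt (Dt γ) t x y z - D1 (D1 γ) t x y z
          + (of (spatialDeriv γ t x y z)).adjugate *ᵥ spatialDeriv P t x y z = 0)
        ∧ ∀ t x y z, (of (spatialDeriv γ t x y z)).det = 1 := by
  simp only [SystemN, spatialDeriv, adjugate_of_rows_mulVec, cons_val, add_assoc]

variable {a Ξ₁ Ξ₂ : ℝ → ℝ → ℝ}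

lemma systemN_reparam (hγ : Differentiable ℝ (uncurry₄ γ)) (hP : Differentiable ℝ (uncurry₄ P))
    (hsol : SystemN γ P) (ha : Differentiable ℝ (Function.uncurry a))
    (hΞ₁ : Differentiable ℝ (Function.uncurry Ξ₁)) (hΞ₂ : Differentiable ℝ (Function.uncurry Ξ₂))
    (hdet : ∀ y z, (reparamJacobian a Ξ₁ Ξ₂ y z).det = 1) :
    SystemN (reparam γ a Ξ₁ Ξ₂) (reparam P a Ξ₁ Ξ₂) := by
  obtain ⟨hmomentum, hvolume⟩ := systemN_iff_adjugate.1 hsol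
  have hM (t x y z : ℝ) : of (spatialDeriv (reparam γ a Ξ₁ Ξ₂) t x y z)
      = reparamJacobian a Ξ₁ Ξ₂ y z
        * of (spatialDeriv γ t (x + a y z) (Ξ₁ y z) (Ξ₂ y z)) := by
    ext i k
    simp [spatialDeriv_reparam (hγ _) (ha _) (hΞ₁ _) (hΞ₂ _), mul_apply]
  have hgrad (t x y z : ℝ) : spatialDeriv (reparam P a Ξ₁ Ξ₂) t x y z
      = reparamJacobian a Ξ₁ Ξ₂ y z
        *ᵥ spatialDeriv P t (x + a y z) (Ξ₁ y z) (Ξ₂ y z) :=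
    funext (spatialDeriv_reparam (hP _) (ha _) (hΞ₁ _) (hΞ₂ _))
  refine systemN_iff_adjugate.2 ⟨fun t x y z => ?_, fun t x y z => ?_⟩
  · rw [hM, hgrad, adjugate_mul_mulVec_mulVec, hdet, one_smul, D1_reparam, D1_reparam]
    exact hmomentum t (x + a y z) (Ξ₁ y z) (Ξ₂ y z)
  · rw [hM, det_mul, hdet, hvolume, one_mul]

theorem reparametrization_symmetry_systemN_general {n : WithTop ℕ∞} (hn : 2 ≤ n)
    (hγ : ContDiff ℝ n (uncurry₄ γ)) (hP : ContDiff ℝ n (uncurry₄ P)) (hsol : SystemN γ P)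
    (ha : ContDiff ℝ n (Function.uncurry a)) (hΞ₁ : ContDiff ℝ n (Function.uncurry Ξ₁))
    (hΞ₂ : ContDiff ℝ n (Function.uncurry Ξ₂))
    (hjac : ∀ y z : ℝ,
      deriv (fun s => Ξ₁ s z) y * deriv (fun s => Ξ₂ y s) z
        - deriv (fun s => Ξ₁ y s) z * deriv (fun s => Ξ₂ s z) y = 1) :
    ContDiff ℝ n (uncurry₄ (reparam γ a Ξ₁ Ξ₂)) ∧
    ContDiff ℝ n (uncurry₄ (reparam P a Ξ₁ Ξ₂)) ∧
    SystemN (reparam γ a Ξ₁ Ξ₂) (reparam P a Ξ₁ Ξ₂) := by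
  have hn₀ : n ≠ 0 := (zero_lt_two.trans_le hn).ne'
  refine ⟨contDiff_reparam hγ ha hΞ₁ hΞ₂, contDiff_reparam hP ha hΞ₁ hΞ₂, ?_⟩
  exact systemN_reparam (hγ.differentiable hn₀) (hP.differentiable hn₀) hsol
    (ha.differentiable hn₀) (hΞ₁.differentiable hn₀) (hΞ₂.differentiable hn₀)
    fun y z => (det_reparamJacobian a Ξ₁ Ξ₂ y z).trans (hjac y z)

end Symmetry

/-- Reparametrization symmetry of system (N): if `(γ, P)` is a smooth solution,
`a : ℝ² → ℝ` is smooth and `Ξ = (Ξ¹, Ξ²) : ℝ² → ℝ²` is a smooth map with Jacobian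
determinant identically `1`, then
`γ̄(t,ξ¹,ξ²,ξ³) = γ(t, ξ¹ + a(ξ²,ξ³), Ξ¹(ξ²,ξ³), Ξ²(ξ²,ξ³))`,
`P̄(t,ξ¹,ξ²,ξ³) = P(t, ξ¹ + a(ξ²,ξ³), Ξ¹(ξ²,ξ³), Ξ²(ξ²,ξ³))` is again a smooth
solution. -/
theorem reparametrization_symmetry_systemN
    (γ : ℝ → ℝ → ℝ → ℝ → V3) (P : ℝ → ℝ → ℝ → ℝ → ℝ)
    (hγ : Smooth4 γ) (hP : Smooth4 P) (hsol : SystemN γ P)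
    (a : ℝ → ℝ → ℝ) (Ξ₁ Ξ₂ : ℝ → ℝ → ℝ)
    (ha : ContDiff ℝ (⊤ : ℕ∞) (fun q : ℝ × ℝ => a q.1 q.2))
    (hΞ₁ : ContDiff ℝ (⊤ : ℕ∞) (fun q : ℝ × ℝ => Ξ₁ q.1 q.2))
    (hΞ₂ : ContDiff ℝ (⊤ : ℕ∞) (fun q : ℝ × ℝ => Ξ₂ q.1 q.2))
    (hjac : ∀ b c : ℝ,
      deriv (fun s => Ξ₁ s c) b * deriv (fun s => Ξ₂ b s) c
        - deriv (fun s => Ξ₁ b s) c * deriv (fun s => Ξ₂ s c) b = 1) :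
    Smooth4 (fun t x1 b c => γ t (x1 + a b c) (Ξ₁ b c) (Ξ₂ b c)) ∧
    Smooth4 (fun t x1 b c => P t (x1 + a b c) (Ξ₁ b c) (Ξ₂ b c)) ∧
    SystemN (fun t x1 b c => γ t (x1 + a b c) (Ξ₁ b c) (Ξ₂ b c))
      (fun t x1 b c => P t (x1 + a b c) (Ξ₁ b c) (Ξ₂ b c)) :=
  reparametrization_symmetry_systemN_general (WithTop.coe_le_coe.2 le_top) hγ hP hsol
    ha hΞ₁ hΞ₂ hjac
end
end

section
/- Let u : ℝ → ℝ, τ¹ : ℝ³ → ℝ, λ : ℝ³ → ℝ and τ², τ³ : ℝ² → ℝ be smooth, let P₀ ∈ ℝ, and define γ(t, ξ¹, ξ², ξ³) = ( u(t−ξ¹) + τ¹(μ, ξ², ξ³), τ²(μ, λ(μ, ξ², ξ³)), τ³(μ, λ(μ, ξ², ξ³)) ) with μ = t + ξ¹, and P ≡ P₀. Then (γ, P) is a solution of system (N) if and only if at every point (τ²₁ τ³_λ − τ²_λ τ³₁)·(λ₂ τ¹₃ − λ₃ τ¹₂) = 1, where τ²₁, τ³₁ and τ²_λ, τ³_λ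 denote the partial derivatives of τ², τ³ with respect to their first argument μ and second argument λ, τ¹ᵢ and λᵢ (i = 2,3) denote partial derivatives with respect to ξⁱ, all evaluated at the corresponding composed arguments. -/
open Matrix

noncomputable section

noncomputable def P2 {E : Type*} [NormedAddCommGroup E] [NormedSpace ℝ E]
    (f : ℝ → ℝ → ℝ → E) : ℝ → ℝ → ℝ → E :=
  fun s b c => deriv (fun x => f s x c) b

noncomputable def P3 {E : Type*} [NormedAddCommGroup E] [NormedSpace ℝ E]
    (f : ℝ → ℝ → ℝ → E) : ℝ → ℝ → ℝ → E :=
  fun s b c => deriv (fun x => f s b x) c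

noncomputable def Q1 (f : ℝ → ℝ → ℝ) : ℝ → ℝ → ℝ :=
  fun m l => deriv (fun x => f x l) m

noncomputable def Q2 (f : ℝ → ℝ → ℝ) : ℝ → ℝ → ℝ :=
  fun m l => deriv (fun x => f m x) l

/-! `γ` is a sum of a function of `t - ξ¹` and a function of `t + ξ¹`, so by d'Alembert it solves
the wave equation, which is all that remains of the momentum equation when the pressure is constant.
In `det (∂γ/∂ξ)` the last two components of `∂γ/∂ξ²` and of `∂γ/∂ξ³` are multiples of
`(tau2_λ, tau3_λ)`, so only the `μ`-derivatives of `tau2` and `tau3` survive from `∂γ/∂ξ¹`. As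
`μ = t + ξ¹` takes every real value, `det = 1` for all `t, ξ` is the stated condition. -/

section General

variable {𝕜 E : Type*} [NontriviallyNormedField 𝕜] [NormedAddCommGroup E] [NormedSpace 𝕜 E]

theorem iteratedDeriv_add_travelling_of_even {n : ℕ} (hn : Even n) {F G : 𝕜 → E}
    (hF : ContDiff 𝕜 n F) (hG : ContDiff 𝕜 n G) (t a : 𝕜) :
    iteratedDeriv n (fun s => F (s - a) + G (s + a)) t =
      iteratedDeriv n (fun s => F (t - s) + G (t + s)) a := by
  rw [iteratedDeriv_fun_add (by fun_prop) (by fun_prop),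
    iteratedDeriv_fun_add (by fun_prop) (by fun_prop), iteratedDeriv_comp_sub_const,
    iteratedDeriv_comp_add_const, iteratedDeriv_comp_const_sub, iteratedDeriv_comp_const_add]
  simp only [hn.neg_one_pow, one_smul]

theorem hasDerivAt_comp_of_differentiableAt_uncurried {f : 𝕜 → 𝕜 → E} {x y : 𝕜 → 𝕜} {x' y' s : 𝕜}
    (hf : DifferentiableAt 𝕜 (fun q : 𝕜 × 𝕜 => f q.1 q.2) (x s, y s))
    (hx : HasDerivAt x x' s) (hy : HasDerivAt y y' s) :
    HasDerivAt (fun r => f (x r) (y r))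
      (x' • deriv (fun r => f r (y s)) (x s) + y' • deriv (fun r => f (x s) r) (y s)) s := by
  set L := fderiv 𝕜 (fun q : 𝕜 × 𝕜 => f q.1 q.2) (x s, y s)
  have left : deriv (fun r => f r (y s)) (x s) = L (1, 0) :=
    (hf.hasFDerivAt.comp_hasDerivAt (x s) (f := fun r => (r, y s))
      ((hasDerivAt_id (x s)).prodMk (hasDerivAt_const (x s) (y s)))).deriv
  have right : deriv (fun r => f (x s) r) (y s) = L (0, 1) :=
    (hf.hasFDerivAt.comp_hasDerivAt (y s) (f := fun r => (x s, r))
      ((hasDerivAt_const (y s) (x s)).prodMk (hasDerivAt_id (y s)))).deriv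
  have decomposition : L (x', y') = x' • L (1, 0) + y' • L (0, 1) := by
    rw [← map_smul, ← map_smul, ← map_add]
    simp
  rw [left, right, ← decomposition]
  exact hf.hasFDerivAt.comp_hasDerivAt s (hx.prodMk hy)

theorem det_fin_three_of_collinear_tails {R : Type*} [CommRing R]
    (x y z p q j k l v w : R) :
    !![x, y + j * p, z + j * q; v, k * p, k * q; w, l * p, l * q].det =
      (y * q - p * z) * (k * w - l * v) := by
  rw [det_fin_three]
  simp only [of_apply, cons_val]
  ring

end General

section PartialDerivatives

variable {E : Type*} [NormedAddCommGroup E] [NormedSpace ℝ E]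

theorem Dt_Dt_apply (γ : ℝ → ℝ → ℝ → ℝ → E) (t a b c : ℝ) :
    Dt (Dt γ) t a b c = iteratedDeriv 2 (fun s => γ s a b c) t := by
  rw [iteratedDeriv_eq_iterate]
  rfl

theorem D1_D1_apply (γ : ℝ → ℝ → ℝ → ℝ → E) (t a b c : ℝ) :
    D1 (D1 γ) t a b c = iteratedDeriv 2 (fun s => γ t s b c) a := by
  rw [iteratedDeriv_eq_iterate]
  rfl

theorem Dt_Dt_eq_D1_D1_of_eq_add_travelling {γ : ℝ → ℝ → ℝ → ℝ → E} {F G : ℝ → ℝ → ℝ → E}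
    (hF : ∀ b c, ContDiff ℝ 2 fun m => F m b c) (hG : ∀ b c, ContDiff ℝ 2 fun m => G m b c)
    (hγ : ∀ t a b c, γ t a b c = F (t - a) b c + G (t + a) b c) :
    Dt (Dt γ) = D1 (D1 γ) := by
  ext t a b c
  simpa only [Dt_Dt_apply, D1_D1_apply, hγ] using
    iteratedDeriv_add_travelling_of_even even_two (hF b c) (hG b c) t a

theorem hasDerivAt_P2 {f : ℝ → ℝ → ℝ → E}
    (hf : Differentiable ℝ fun q : ℝ × ℝ × ℝ => f q.1 q.2.1 q.2.2) (m b c : ℝ) :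
    HasDerivAt (fun x => f m x c) (P2 f m b c) b :=
  (hf.comp (f := fun x : ℝ => (m, x, c)) (by fun_prop) b).hasDerivAt

theorem hasDerivAt_P3 {f : ℝ → ℝ → ℝ → E}
    (hf : Differentiable ℝ fun q : ℝ × ℝ × ℝ => f q.1 q.2.1 q.2.2) (m b c : ℝ) :
    HasDerivAt (fun x => f m b x) (P3 f m b c) c :=
  (hf.comp (f := fun x : ℝ => (m, b, x)) (by fun_prop) c).hasDerivAt

theorem hasDerivAt_comp_Q1_Q2 {f : ℝ → ℝ → ℝ} (hf : Differentiable ℝ fun q : ℝ × ℝ => f q.1 q.2)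
    {x y : ℝ → ℝ} {x' y' s : ℝ} (hx : HasDerivAt x x' s) (hy : HasDerivAt y y' s) :
    HasDerivAt (fun r => f (x r) (y r)) (x' * Q1 f (x s) (y s) + y' * Q2 f (x s) (y s)) s :=
  hasDerivAt_comp_of_differentiableAt_uncurried (hf _) hx hy

end PartialDerivatives

theorem systemN_const_pressure_iff (γ : ℝ → ℝ → ℝ → ℝ → V3) (P₀ : ℝ) :
    SystemN γ (fun _ _ _ _ => P₀) ↔
      Dt (Dt γ) = D1 (D1 γ) ∧
        ∀ t a b c, (Matrix.of ![D1 γ t a b c, D2 γ t a b c, D3 γ t a b c]).det = 1 := by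
  simp [SystemN, funext_iff, sub_eq_zero, D1, D2, D3]

/-- The map `γ` of the `dim{σ} = 2` family: its first component is the sum of a wave `u` moving
along `ξ¹` and a wave moving against it, while the other two depend on `ξ², ξ³` only through `λ`. -/
def dimTwoFlow (u : ℝ → ℝ) (tau1 lam : ℝ → ℝ → ℝ → ℝ) (tau2 tau3 : ℝ → ℝ → ℝ) :
    ℝ → ℝ → ℝ → ℝ → V3 :=
  fun t a b c =>
    ![u (t - a) + tau1 (t + a) b c,
      tau2 (t + a) (lam (t + a) b c),
      tau3 (t + a) (lam (t + a) b c)]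

section DimTwoFlow

variable {u : ℝ → ℝ} {tau1 lam : ℝ → ℝ → ℝ → ℝ} {tau2 tau3 : ℝ → ℝ → ℝ}

theorem Dt_Dt_dimTwoFlow_eq_D1_D1 (hu : ContDiff ℝ 2 u)
    (htau1 : ContDiff ℝ 2 fun q : ℝ × ℝ × ℝ => tau1 q.1 q.2.1 q.2.2)
    (hlam : ContDiff ℝ 2 fun q : ℝ × ℝ × ℝ => lam q.1 q.2.1 q.2.2)
    (htau2 : ContDiff ℝ 2 fun q : ℝ × ℝ => tau2 q.1 q.2)
    (htau3 : ContDiff ℝ 2 fun q : ℝ × ℝ => tau3 q.1 q.2) :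
    Dt (Dt (dimTwoFlow u tau1 lam tau2 tau3)) = D1 (D1 (dimTwoFlow u tau1 lam tau2 tau3)) := by
  have slice {f : ℝ → ℝ → ℝ → ℝ} (hf : ContDiff ℝ 2 fun q : ℝ × ℝ × ℝ => f q.1 q.2.1 q.2.2)
      (b c : ℝ) : ContDiff ℝ 2 fun m => f m b c :=
    hf.comp (contDiff_prodMk_left (b, c))
  have comp_lam {f : ℝ → ℝ → ℝ} (hf : ContDiff ℝ 2 fun q : ℝ × ℝ => f q.1 q.2) (b c : ℝ) :
      ContDiff ℝ 2 fun m => f m (lam m b c) :=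
    hf.comp (contDiff_id.prodMk (slice hlam b c))
  refine Dt_Dt_eq_D1_D1_of_eq_add_travelling (F := fun m _ _ => ![u m, 0, 0])
    (G := fun m b c => ![tau1 m b c, tau2 m (lam m b c), tau3 m (lam m b c)])
    (fun _ _ => ?_) (fun b c => ?_) (fun t a b c => ?_)
  · simpa [contDiff_pi, Fin.forall_fin_succ, contDiff_const] using hu
  · simpa [contDiff_pi, Fin.forall_fin_succ] using
      ⟨slice htau1 b c, comp_lam htau2 b c, comp_lam htau3 b c⟩
  · simp [dimTwoFlow]

theorem hasDerivAt_vec3_comp (htau2 : Differentiable ℝ fun q : ℝ × ℝ => tau2 q.1 q.2)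
    (htau3 : Differentiable ℝ fun q : ℝ × ℝ => tau3 q.1 q.2)
    {x m l : ℝ → ℝ} {x' m' l' s : ℝ}
    (hx : HasDerivAt x x' s) (hm : HasDerivAt m m' s) (hl : HasDerivAt l l' s) :
    HasDerivAt (fun r => (![x r, tau2 (m r) (l r), tau3 (m r) (l r)] : V3))
      ![x',
        m' * Q1 tau2 (m s) (l s) + l' * Q2 tau2 (m s) (l s),
        m' * Q1 tau3 (m s) (l s) + l' * Q2 tau3 (m s) (l s)] s :=
  hx.finCons <| (hasDerivAt_comp_Q1_Q2 htau2 hm hl).finCons <|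
    (hasDerivAt_comp_Q1_Q2 htau3 hm hl).finCons <| hasDerivAt_pi.mpr (Fin.elim0 ·)

theorem D1_dimTwoFlow (hu : Differentiable ℝ u)
    (htau1 : Differentiable ℝ fun q : ℝ × ℝ × ℝ => tau1 q.1 q.2.1 q.2.2)
    (hlam : Differentiable ℝ fun q : ℝ × ℝ × ℝ => lam q.1 q.2.1 q.2.2)
    (htau2 : Differentiable ℝ fun q : ℝ × ℝ => tau2 q.1 q.2)
    (htau3 : Differentiable ℝ fun q : ℝ × ℝ => tau3 q.1 q.2) (t a b c : ℝ) :
    D1 (dimTwoFlow u tau1 lam tau2 tau3) t a b c =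
      ![-deriv u (t - a) + deriv (fun m => tau1 m b c) (t + a),
        Q1 tau2 (t + a) (lam (t + a) b c) +
          deriv (fun m => lam m b c) (t + a) * Q2 tau2 (t + a) (lam (t + a) b c),
        Q1 tau3 (t + a) (lam (t + a) b c) +
          deriv (fun m => lam m b c) (t + a) * Q2 tau3 (t + a) (lam (t + a) b c)] := by
  have slice {f : ℝ → ℝ → ℝ → ℝ} (hf : Differentiable ℝ fun q : ℝ × ℝ × ℝ => f q.1 q.2.1 q.2.2) :
      HasDerivAt (fun s => f (t + s) b c) (deriv (fun m => f m b c) (t + a)) a :=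
    (hf.comp (f := fun m : ℝ => (m, b, c)) (by fun_prop) (t + a)).hasDerivAt.comp_const_add t a
  exact (hasDerivAt_vec3_comp htau2 htau3
      (((hu (t - a)).hasDerivAt.comp_const_sub t a).add (slice htau1))
      ((hasDerivAt_id a).const_add t) (slice hlam)).deriv.trans (by simp only [one_mul, id])

theorem D2_dimTwoFlow
    (htau1 : Differentiable ℝ fun q : ℝ × ℝ × ℝ => tau1 q.1 q.2.1 q.2.2)
    (hlam : Differentiable ℝ fun q : ℝ × ℝ × ℝ => lam q.1 q.2.1 q.2.2)
    (htau2 : Differentiable ℝ fun q : ℝ × ℝ => tau2 q.1 q.2)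
    (htau3 : Differentiable ℝ fun q : ℝ × ℝ => tau3 q.1 q.2) (t a b c : ℝ) :
    D2 (dimTwoFlow u tau1 lam tau2 tau3) t a b c =
      ![P2 tau1 (t + a) b c,
        P2 lam (t + a) b c * Q2 tau2 (t + a) (lam (t + a) b c),
        P2 lam (t + a) b c * Q2 tau3 (t + a) (lam (t + a) b c)] :=
  (hasDerivAt_vec3_comp htau2 htau3
      ((hasDerivAt_P2 htau1 (t + a) b c).const_add (u (t - a)))
      (hasDerivAt_const b (t + a)) (hasDerivAt_P2 hlam (t + a) b c)).deriv.trans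
    (by simp only [zero_mul, zero_add])

theorem D3_dimTwoFlow
    (htau1 : Differentiable ℝ fun q : ℝ × ℝ × ℝ => tau1 q.1 q.2.1 q.2.2)
    (hlam : Differentiable ℝ fun q : ℝ × ℝ × ℝ => lam q.1 q.2.1 q.2.2)
    (htau2 : Differentiable ℝ fun q : ℝ × ℝ => tau2 q.1 q.2)
    (htau3 : Differentiable ℝ fun q : ℝ × ℝ => tau3 q.1 q.2) (t a b c : ℝ) :
    D3 (dimTwoFlow u tau1 lam tau2 tau3) t a b c =
      ![P3 tau1 (t + a) b c,
        P3 lam (t + a) b c * Q2 tau2 (t + a) (lam (t + a) b c),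
        P3 lam (t + a) b c * Q2 tau3 (t + a) (lam (t + a) b c)] :=
  (hasDerivAt_vec3_comp htau2 htau3
      ((hasDerivAt_P3 htau1 (t + a) b c).const_add (u (t - a)))
      (hasDerivAt_const c (t + a)) (hasDerivAt_P3 hlam (t + a) b c)).deriv.trans
    (by simp only [zero_mul, zero_add])

theorem det_jacobian_dimTwoFlow (hu : Differentiable ℝ u)
    (htau1 : Differentiable ℝ fun q : ℝ × ℝ × ℝ => tau1 q.1 q.2.1 q.2.2)
    (hlam : Differentiable ℝ fun q : ℝ × ℝ × ℝ => lam q.1 q.2.1 q.2.2)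
    (htau2 : Differentiable ℝ fun q : ℝ × ℝ => tau2 q.1 q.2)
    (htau3 : Differentiable ℝ fun q : ℝ × ℝ => tau3 q.1 q.2) (t a b c : ℝ) :
    (Matrix.of ![D1 (dimTwoFlow u tau1 lam tau2 tau3) t a b c,
        D2 (dimTwoFlow u tau1 lam tau2 tau3) t a b c,
        D3 (dimTwoFlow u tau1 lam tau2 tau3) t a b c]).det =
      (Q1 tau2 (t + a) (lam (t + a) b c) * Q2 tau3 (t + a) (lam (t + a) b c)
          - Q2 tau2 (t + a) (lam (t + a) b c) * Q1 tau3 (t + a) (lam (t + a) b c))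
        * (P2 lam (t + a) b c * P3 tau1 (t + a) b c
          - P3 lam (t + a) b c * P2 tau1 (t + a) b c) := by
  rw [D1_dimTwoFlow hu htau1 hlam htau2 htau3, D2_dimTwoFlow htau1 hlam htau2 htau3,
    D3_dimTwoFlow htau1 hlam htau2 htau3]
  exact det_fin_three_of_collinear_tails ..

end DimTwoFlow

theorem nonstationary_dim2_solution_general
    (u : ℝ → ℝ) (tau1 lam : ℝ → ℝ → ℝ → ℝ) (tau2 tau3 : ℝ → ℝ → ℝ) (P₀ : ℝ)
    (hu : ContDiff ℝ 2 u)
    (htau1 : ContDiff ℝ 2 (fun q : ℝ × ℝ × ℝ => tau1 q.1 q.2.1 q.2.2))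
    (hlam : ContDiff ℝ 2 (fun q : ℝ × ℝ × ℝ => lam q.1 q.2.1 q.2.2))
    (htau2 : ContDiff ℝ 2 (fun q : ℝ × ℝ => tau2 q.1 q.2))
    (htau3 : ContDiff ℝ 2 (fun q : ℝ × ℝ => tau3 q.1 q.2)) :
    SystemN (dimTwoFlow u tau1 lam tau2 tau3) (fun _ _ _ _ => P₀)
    ↔ ∀ m b c : ℝ,
        (Q1 tau2 m (lam m b c) * Q2 tau3 m (lam m b c)
            - Q2 tau2 m (lam m b c) * Q1 tau3 m (lam m b c))
          * (P2 lam m b c * P3 tau1 m b c - P3 lam m b c * P2 tau1 m b c) = 1 := by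
  have det_eq := det_jacobian_dimTwoFlow (hu.differentiable two_ne_zero)
    (htau1.differentiable two_ne_zero) (hlam.differentiable two_ne_zero)
    (htau2.differentiable two_ne_zero) (htau3.differentiable two_ne_zero)
  rw [systemN_const_pressure_iff,
    and_iff_right (Dt_Dt_dimTwoFlow_eq_D1_D1 hu htau1 hlam htau2 htau3)]
  simp only [det_eq]
  exact ⟨fun h m b c => by simpa only [add_zero] using h m 0 b c, fun h t a => h (t + a)⟩

/-- The non-stationary constant-total-pressure solutions with dim{σ} = 2:
`γ = (u(t−ξ¹) + tau1(μ,ξ²,ξ³), tau2(μ,λ(μ,ξ²,ξ³)), tau3(μ,λ(μ,ξ²,ξ³)))`, `μ = t+ξ¹`,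
with constant total pressure solves system (N) iff
`(tau2₁ tau3_λ − tau2_λ tau3₁)(λ₂ tau1₃ − λ₃ tau1₂) = 1` at every point. -/
theorem nonstationary_dim2_solution
    (u : ℝ → ℝ) (tau1 lam : ℝ → ℝ → ℝ → ℝ) (tau2 tau3 : ℝ → ℝ → ℝ) (P₀ : ℝ)
    (hu : ContDiff ℝ (⊤ : ℕ∞) u)
    (htau1 : ContDiff ℝ (⊤ : ℕ∞) (fun q : ℝ × ℝ × ℝ => tau1 q.1 q.2.1 q.2.2))
    (hlam : ContDiff ℝ (⊤ : ℕ∞) (fun q : ℝ × ℝ × ℝ => lam q.1 q.2.1 q.2.2))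
    (htau2 : ContDiff ℝ (⊤ : ℕ∞) (fun q : ℝ × ℝ => tau2 q.1 q.2))
    (htau3 : ContDiff ℝ (⊤ : ℕ∞) (fun q : ℝ × ℝ => tau3 q.1 q.2)) :
    SystemN
      (fun t a b c =>
        ![u (t - a) + tau1 (t + a) b c,
          tau2 (t + a) (lam (t + a) b c),
          tau3 (t + a) (lam (t + a) b c)])
      (fun _ _ _ _ => P₀)
    ↔ ∀ m b c : ℝ,
        (Q1 tau2 m (lam m b c) * Q2 tau3 m (lam m b c)
            - Q2 tau2 m (lam m b c) * Q1 tau3 m (lam m b c))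
          * (P2 lam m b c * P3 tau1 m b c - P3 lam m b c * P2 tau1 m b c) = 1 :=
  have two_le : (2 : WithTop ℕ∞) ≤ (⊤ : ℕ∞) := ENat.LEInfty.out
  nonstationary_dim2_solution_general u tau1 lam tau2 tau3 P₀ (hu.of_le two_le)
    (htau1.of_le two_le) (hlam.of_le two_le) (htau2.of_le two_le) (htau3.of_le two_le)
end
end

section
/- Let u¹, u², τ³ : ℝ → ℝ and τ¹, τ² : ℝ³ → ℝ be smooth, let P₀ ∈ ℝ, and define γ(t, ξ¹, ξ², ξ³) = ( u¹(t−ξ¹) + τ¹(μ, ξ², ξ³), u²(t−ξ¹) + τ²(μ, ξ², ξ³), τ³(μ) ) with μ = t + ξ¹, and P ≡ P₀. Then (γ, P) is a solution of system (N) if and only if at every point (dτ³/dμ)·(τ¹₂ τ²₃ − τ¹₃ τ²₂) = 1, where τⁱⱼ denotes the partial derivative of τⁱ with respect to ξʲ (evaluated at (μ, ξ², ξ³)). -/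
open Matrix

noncomputable section

/-!
The map `γ` is a wave `f (t - ξ¹)` plus a wave `g (t + ξ¹, ξ², ξ³)`, so it solves the wave equation
`γ_tt = γ_11`, and this is all the momentum equation says when the pressure is constant in space.
The incompressibility condition remains. The third component of `γ` is `τ³ (t + ξ¹)`, so `γ_2` and
`γ_3` are horizontal, and expanding the Jacobian determinant along its third column leaves only
`dτ³/dμ` from `γ_1`; all derivatives of `f` drop out.
-/

/-- The first partial derivative of a function of `(μ, ξ², ξ³)`, completing `P2` and `P3`. -/
def P1 {E : Type*} [NormedAddCommGroup E] [NormedSpace ℝ E]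
    (g : ℝ → ℝ → ℝ → E) : ℝ → ℝ → ℝ → E :=
  fun s b c => deriv (fun x => g x b c) s

/-- The d'Alembert superposition `f (t - ξ¹) + g (t + ξ¹, ξ², ξ³)` of two waves travelling in
opposite directions along `ξ¹`, only the second of which depends on the transverse coordinates. -/
def dAlembert {E : Type*} [Add E] (f : ℝ → E) (g : ℝ → ℝ → ℝ → E) :
    ℝ → ℝ → ℝ → ℝ → E :=
  fun t a b c => f (t - a) + g (t + a) b c

section DAlembert

variable {E : Type*} [NormedAddCommGroup E] [NormedSpace ℝ E] {f : ℝ → E} {g : ℝ → ℝ → ℝ → E}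

theorem Dt_dAlembert (hf : Differentiable ℝ f) (hg : ∀ b c, Differentiable ℝ fun m => g m b c) :
    Dt (dAlembert f g) = dAlembert (deriv f) (P1 g) := by
  funext t a b c
  have hgbc := hg b c
  simp only [Dt, dAlembert, P1]
  rw [deriv_fun_add (by fun_prop) (by fun_prop), deriv_comp_sub_const,
    deriv_comp_add_const (fun m => g m b c)]

theorem D1_dAlembert (hf : Differentiable ℝ f) (hg : ∀ b c, Differentiable ℝ fun m => g m b c) :
    D1 (dAlembert f g) = dAlembert (-deriv f) (P1 g) := by
  funext t a b c
  have hgbc := hg b c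
  simp only [D1, dAlembert, P1, Pi.neg_apply]
  rw [deriv_fun_add (by fun_prop) (by fun_prop), deriv_comp_const_sub,
    deriv_comp_const_add (fun m => g m b c)]

theorem D2_dAlembert (t a b c : ℝ) : D2 (dAlembert f g) t a b c = P2 g (t + a) b c :=
  deriv_const_add _

theorem D3_dAlembert (t a b c : ℝ) : D3 (dAlembert f g) t a b c = P3 g (t + a) b c :=
  deriv_const_add _

theorem Dt_Dt_dAlembert_eq_D1_D1 (hf : ContDiff ℝ 2 f)
    (hg : ∀ b c, ContDiff ℝ 2 fun m => g m b c) :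
    Dt (Dt (dAlembert f g)) = D1 (D1 (dAlembert f g)) := by
  have hf₁ : Differentiable ℝ f := hf.differentiable two_ne_zero
  have hf₂ : Differentiable ℝ (deriv f) := hf.differentiable_deriv_two
  have hg₁ : ∀ b c, Differentiable ℝ fun m => g m b c :=
    fun b c => (hg b c).differentiable two_ne_zero
  have hg₂ : ∀ b c, Differentiable ℝ fun m => P1 g m b c :=
    fun b c => (hg b c).differentiable_deriv_two
  have deriv_neg_deriv : deriv (-deriv f) = -deriv (deriv f) := deriv.neg'
  rw [Dt_dAlembert hf₁ hg₁, Dt_dAlembert hf₂ hg₂, D1_dAlembert hf₁ hg₁,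
    D1_dAlembert hf₂.neg hg₂, deriv_neg_deriv, neg_neg]

end DAlembert

theorem systemN_dAlembert_iff {f : ℝ → V3} {g : ℝ → ℝ → ℝ → V3} (p : ℝ → ℝ)
    (hf : ContDiff ℝ 2 f) (hg : ∀ b c, ContDiff ℝ 2 fun m => g m b c) :
    SystemN (dAlembert f g) (fun t _ _ _ => p t) ↔
      ∀ t a b c, (Matrix.of ![-deriv f (t - a) + P1 g (t + a) b c,
        P2 g (t + a) b c, P3 g (t + a) b c]).det = 1 := by
  have hD1 : ∀ t a b c,
      D1 (dAlembert f g) t a b c = -deriv f (t - a) + P1 g (t + a) b c := by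
    intro t a b c
    rw [D1_dAlembert (hf.differentiable two_ne_zero)
      fun b c => (hg b c).differentiable two_ne_zero]
    rfl
  have wave_equation : ∀ t a b c,
      Dt (Dt (dAlembert f g)) t a b c - D1 (D1 (dAlembert f g)) t a b c = 0 := by
    simp [Dt_Dt_dAlembert_eq_D1_D1 hf hg]
  have D1_p : ∀ t a b c, D1 (fun t _ _ _ => p t) t a b c = 0 := by simp [D1]
  have D2_p : ∀ t a b c, D2 (fun t _ _ _ => p t) t a b c = 0 := by simp [D2]
  have D3_p : ∀ t a b c, D3 (fun t _ _ _ => p t) t a b c = 0 := by simp [D3]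
  simp only [SystemN, wave_equation, D1_p, D2_p, D3_p, zero_smul, add_zero, implies_true, true_and,
    hD1, D2_dAlembert, D3_dAlembert]

section Vec3

variable {𝕜 : Type*} [NontriviallyNormedField 𝕜]

theorem deriv_vec3 {F : Type*} [NormedAddCommGroup F] [NormedSpace 𝕜 F] {x y z : 𝕜 → F} {s : 𝕜}
    (hx : DifferentiableAt 𝕜 x s) (hy : DifferentiableAt 𝕜 y s) (hz : DifferentiableAt 𝕜 z s) :
    deriv (fun r => ![x r, y r, z r]) s = ![deriv x s, deriv y s, deriv z s] := by
  refine (hasDerivAt_pi.2 fun i => ?_).deriv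
  fin_cases i
  exacts [hx.hasDerivAt, hy.hasDerivAt, hz.hasDerivAt]

theorem contDiff_vec3 {E F : Type*} [NormedAddCommGroup E] [NormedSpace 𝕜 E]
    [NormedAddCommGroup F] [NormedSpace 𝕜 F] {n : WithTop ℕ∞} {x y z : E → F}
    (hx : ContDiff 𝕜 n x) (hy : ContDiff 𝕜 n y) (hz : ContDiff 𝕜 n z) :
    ContDiff 𝕜 n fun v => ![x v, y v, z v] := by
  refine contDiff_pi.2 fun i => ?_
  fin_cases i
  exacts [hx, hy, hz]

end Vec3

theorem det_fin_three_of_last_col_eq_zero {R : Type*} [CommRing R] (v : Fin 3 → R)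
    (x₁ x₂ y₁ y₂ : R) :
    (Matrix.of ![v, ![x₁, x₂, 0], ![y₁, y₂, 0]]).det = v 2 * (x₁ * y₂ - y₁ * x₂) := by
  simp only [det_fin_three, of_apply, cons_val]
  ring

section PartialVec3

variable {F : Type*} [NormedAddCommGroup F] [NormedSpace ℝ F]
  {τ₁ τ₂ : ℝ → ℝ → ℝ → F} {τ₃ : ℝ → F} {m b c : ℝ}

theorem P1_vec3
    (h₁ : DifferentiableAt ℝ (fun x => τ₁ x b c) m) (h₂ : DifferentiableAt ℝ (fun x => τ₂ x b c) m)
    (h₃ : DifferentiableAt ℝ τ₃ m) :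
    P1 (fun m b c => ![τ₁ m b c, τ₂ m b c, τ₃ m]) m b c =
      ![P1 τ₁ m b c, P1 τ₂ m b c, deriv τ₃ m] :=
  deriv_vec3 h₁ h₂ h₃

theorem P2_vec3
    (h₁ : DifferentiableAt ℝ (fun x => τ₁ m x c) b)
    (h₂ : DifferentiableAt ℝ (fun x => τ₂ m x c) b) :
    P2 (fun m b c => ![τ₁ m b c, τ₂ m b c, τ₃ m]) m b c = ![P2 τ₁ m b c, P2 τ₂ m b c, 0] := by
  rw [P2, deriv_vec3 h₁ h₂ (differentiableAt_const (τ₃ m)), deriv_const]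
  rfl

theorem P3_vec3
    (h₁ : DifferentiableAt ℝ (fun x => τ₁ m b x) c)
    (h₂ : DifferentiableAt ℝ (fun x => τ₂ m b x) c) :
    P3 (fun m b c => ![τ₁ m b c, τ₂ m b c, τ₃ m]) m b c = ![P3 τ₁ m b c, P3 τ₂ m b c, 0] := by
  rw [P3, deriv_vec3 h₁ h₂ (differentiableAt_const (τ₃ m)), deriv_const]
  rfl

end PartialVec3

theorem det_add_P1_P2_P3_vec3 {τ₁ τ₂ : ℝ → ℝ → ℝ → ℝ} {τ₃ : ℝ → ℝ} {m b c : ℝ} (v : V3)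
    (h₁ : Differentiable ℝ fun q : ℝ × ℝ × ℝ => τ₁ q.1 q.2.1 q.2.2)
    (h₂ : Differentiable ℝ fun q : ℝ × ℝ × ℝ => τ₂ q.1 q.2.1 q.2.2)
    (h₃ : DifferentiableAt ℝ τ₃ m) :
    (Matrix.of ![v + P1 (fun m b c => ![τ₁ m b c, τ₂ m b c, τ₃ m]) m b c,
        P2 (fun m b c => ![τ₁ m b c, τ₂ m b c, τ₃ m]) m b c,
        P3 (fun m b c => ![τ₁ m b c, τ₂ m b c, τ₃ m]) m b c]).det =
      (v 2 + deriv τ₃ m) * (P2 τ₁ m b c * P3 τ₂ m b c - P3 τ₁ m b c * P2 τ₂ m b c) := by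
  rw [P1_vec3 (by fun_prop) (by fun_prop) h₃, P2_vec3 (by fun_prop) (by fun_prop),
    P3_vec3 (by fun_prop) (by fun_prop), det_fin_three_of_last_col_eq_zero]
  rfl

theorem dAlembert_vec3 {R : Type*} [AddZeroClass R] (u₁ u₂ τ₃ : ℝ → R) (τ₁ τ₂ : ℝ → ℝ → ℝ → R) :
    dAlembert (fun s => ![u₁ s, u₂ s, 0]) (fun m b c => ![τ₁ m b c, τ₂ m b c, τ₃ m]) =
      fun t a b c => ![u₁ (t - a) + τ₁ (t + a) b c, u₂ (t - a) + τ₂ (t + a) b c, τ₃ (t + a)] := by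
  funext t a b c
  simp [dAlembert]

theorem nonstationary_dim3_solution_general
    (u1 u2 tau3 p : ℝ → ℝ) (tau1 tau2 : ℝ → ℝ → ℝ → ℝ)
    (hu1 : ContDiff ℝ 2 u1) (hu2 : ContDiff ℝ 2 u2) (htau3 : ContDiff ℝ 2 tau3)
    (htau1 : ContDiff ℝ 2 (fun q : ℝ × ℝ × ℝ => tau1 q.1 q.2.1 q.2.2))
    (htau2 : ContDiff ℝ 2 (fun q : ℝ × ℝ × ℝ => tau2 q.1 q.2.1 q.2.2)) :
    SystemN
      (fun t a b c =>
        ![u1 (t - a) + tau1 (t + a) b c,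
          u2 (t - a) + tau2 (t + a) b c,
          tau3 (t + a)])
      (fun t _ _ _ => p t)
    ↔ ∀ m b c : ℝ,
        deriv tau3 m
          * (P2 tau1 m b c * P3 tau2 m b c - P3 tau1 m b c * P2 tau2 m b c) = 1 := by
  have hf : ContDiff ℝ 2 fun s => ![u1 s, u2 s, 0] := contDiff_vec3 hu1 hu2 contDiff_const
  have hg : ∀ b c, ContDiff ℝ 2 fun m => ![tau1 m b c, tau2 m b c, tau3 m] := fun b c =>
    contDiff_vec3 (by fun_prop) (by fun_prop) htau3
  have deriv_horizontal : ∀ s, (-deriv (fun s => ![u1 s, u2 s, 0]) s) 2 = 0 := fun s => by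
    simp [deriv_vec3 (hu1.differentiable two_ne_zero s) (hu2.differentiable two_ne_zero s)
      (differentiableAt_const (0 : ℝ))]
  rw [← dAlembert_vec3, systemN_dAlembert_iff p hf hg]
  simp only [det_add_P1_P2_P3_vec3 _ (htau1.differentiable two_ne_zero)
    (htau2.differentiable two_ne_zero) (htau3.differentiable two_ne_zero _), deriv_horizontal,
    zero_add]
  exact ⟨fun h m b c => by simpa only [add_zero] using h m 0 b c, fun h t a b c => h (t + a) b c⟩

/-- The non-stationary constant-total-pressure solutions with dim{σ} = 3:
`γ = (u¹(t−ξ¹) + τ¹(μ,ξ²,ξ³), u²(t−ξ¹) + τ²(μ,ξ²,ξ³), τ³(μ))`, `μ = t+ξ¹`,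
with constant total pressure solves system (N) iff
`(dτ³/dμ)(τ¹₂ τ²₃ − τ¹₃ τ²₂) = 1` at every point. -/
theorem nonstationary_dim3_solution
    (u1 u2 tau3 : ℝ → ℝ) (tau1 tau2 : ℝ → ℝ → ℝ → ℝ) (P₀ : ℝ)
    (hu1 : ContDiff ℝ (⊤ : ℕ∞) u1) (hu2 : ContDiff ℝ (⊤ : ℕ∞) u2) (htau3 : ContDiff ℝ (⊤ : ℕ∞) tau3)
    (htau1 : ContDiff ℝ (⊤ : ℕ∞) (fun q : ℝ × ℝ × ℝ => tau1 q.1 q.2.1 q.2.2))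
    (htau2 : ContDiff ℝ (⊤ : ℕ∞) (fun q : ℝ × ℝ × ℝ => tau2 q.1 q.2.1 q.2.2)) :
    SystemN
      (fun t a b c =>
        ![u1 (t - a) + tau1 (t + a) b c,
          u2 (t - a) + tau2 (t + a) b c,
          tau3 (t + a)])
      (fun _ _ _ _ => P₀)
    ↔ ∀ m b c : ℝ,
        deriv tau3 m
          * (P2 tau1 m b c * P3 tau2 m b c - P3 tau1 m b c * P2 tau2 m b c) = 1 :=
  nonstationary_dim3_solution_general u1 u2 tau3 (fun _ => P₀) tau1 tau2 (contDiff_infty.1 hu1 2)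
    (contDiff_infty.1 hu2 2) (contDiff_infty.1 htau3 2) (contDiff_infty.1 htau1 2)
    (contDiff_infty.1 htau2 2)
end
end
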